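/- Let 1 < p < ∞ and let ω and ν be any pair of radial weights. If A_p(ω,ν) < ∞, then M_p(ω,ν) < ∞. -/

import Mathlib

open MeasureTheory Set Metric
open scoped ENNReal NNReal

noncomputable section

/-- `ω̂(r) = ∫_r^1 ω(s) ds`. -/
def hatw (w : ℝ → ℝ) (r : ℝ) : ℝ := ∫ s in Set.Ioo r 1, w s

/-- `ω̂₁(r) = ∫_r^1 s ω(s) ds`. -/
def hat1 (w : ℝ → ℝ) (r : ℝ) : ℝ := ∫ s in Set.Ioo r 1, s * w s

/-- A radial weight: nonnegative, integrable on `[0,1)`, with `ω̂(r) > 0` for `0 ≤ r < 1`. -/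
def IsRadialWeight (w : ℝ → ℝ) : Prop :=
  (∀ r ∈ Set.Ico (0:ℝ) 1, 0 ≤ w r) ∧ MeasureTheory.IntegrableOn w (Set.Ico (0:ℝ) 1) ∧
    ∀ r ∈ Set.Ico (0:ℝ) 1, 0 < hatw w r

/-- `σ(s) = (ω(s)/ν(s)^{1/p})^{p'}`, as an extended nonnegative real (so `σ(s) = ∞`
when `ν(s) = 0 < ω(s)`). -/
def sigmaE (p : ℝ) (w v : ℝ → ℝ) (s : ℝ) : ℝ≥0∞ :=
  (ENNReal.ofReal (w s) / ENNReal.ofReal (v s) ^ (1 / p)) ^ (p / (p - 1))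

/-- The Muckenhoupt-type quantity
`A_p(ω,ν) = sup_{0 ≤ r < 1} ν̂₁(r)^{1/p} σ̂₁(r)^{1/p'} / ω̂₁(r)` (note `1/p' = 1 - 1/p`). -/
def ApE (p : ℝ) (w v : ℝ → ℝ) : ℝ≥0∞ :=
  ⨆ r ∈ Set.Ico (0:ℝ) 1,
    (∫⁻ s in Set.Ioo r 1, ENNReal.ofReal (s * v s)) ^ (1 / p) *
      (∫⁻ s in Set.Ioo r 1, ENNReal.ofReal s * sigmaE p w v s) ^ (1 - 1 / p) /
      ENNReal.ofReal (hat1 w r)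

/-- The quantity `M_p(ω,ν) = sup_{0<r<1} (∫₀^r s ν(s)/ω̂₁(s)^p ds + 1)^{1/p} σ̂₁(r)^{1/p'}`. -/
def MpE (p : ℝ) (w v : ℝ → ℝ) : ℝ≥0∞ :=
  ⨆ r ∈ Set.Ioo (0:ℝ) 1,
    ((∫⁻ s in Set.Ioo 0 r, ENNReal.ofReal (s * v s) / ENNReal.ofReal (hat1 w s) ^ p) + 1) ^ (1 / p) *
      (∫⁻ s in Set.Ioo r 1, ENNReal.ofReal s * sigmaE p w v s) ^ (1 - 1 / p)


lemma young_eps (p : ℝ) (hp : 1 < p) (ε : ℝ) (hε : 0 < ε) :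
    ∃ C : ℝ, 0 < C ∧ ∀ x y : ℝ, 0 ≤ x → 0 ≤ y →
      x ^ (1 / p) * y ^ (1 - 1 / p) ≤ ε * x + C * y := by
  have hp0 : 0 < p := by linarith
  have h1 : 1 / p < 1 := by rw [div_lt_one hp0]; exact hp
  have h0 : 0 < 1 / p := by positivity
  have hq : 0 < 1 - 1 / p := by linarith
  refine ⟨ε ^ (-(1 / p) / (1 - 1 / p)), by positivity, fun x y hx hy => ?_⟩
  set C := ε ^ (-(1 / p) / (1 - 1 / p)) with hC
  have hC0 : 0 < C := by positivity
  have key := Real.geom_mean_le_arith_mean2_weighted h0.le hq.le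
    (mul_nonneg hε.le hx) (mul_nonneg hC0.le hy) (by ring)
  rw [Real.mul_rpow hε.le hx, Real.mul_rpow hC0.le hy] at key
  have hc : C ^ (1 - 1 / p) = ε ^ (-(1 / p)) := by
    rw [hC, ← Real.rpow_mul hε.le]; congr 1; exact div_mul_cancel₀ _ hq.ne'
  have h2 : ε ^ (1 / p) * ε ^ (-(1 / p)) = 1 := by
    rw [← Real.rpow_add hε]; simp
  rw [hc] at key
  have h3 : ε ^ (1 / p) * x ^ (1 / p) * (ε ^ (-(1 / p)) * y ^ (1 - 1 / p))
      = x ^ (1 / p) * y ^ (1 - 1 / p) := by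
    calc _ = (ε ^ (1 / p) * ε ^ (-(1 / p))) * (x ^ (1 / p) * y ^ (1 - 1 / p)) := by ring
      _ = _ := by rw [h2, one_mul]
  rw [h3] at key
  have a1 : 1 / p * (ε * x) ≤ ε * x := by
    have := mul_nonneg hε.le hx; nlinarith
  have a2 : (1 - 1 / p) * (C * y) ≤ C * y := by
    have := mul_nonneg hC0.le hy; nlinarith
  linarith

lemma pointwise_ineq (p : ℝ) (hp : 1 < p) (K : ℝ) (hK : 0 < K) :
    ∃ C : ℝ, 0 < C ∧ ∀ f g h W V S : ℝ, 0 ≤ f → 0 ≤ g → 0 ≤ h → 0 < W → 0 < S →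
      V * S ^ (p - 1) ≤ K * W ^ p → f ≤ g ^ (1 / p) * h ^ (1 - 1 / p) →
      p * V * f * W ^ (-p - 1) ≤ 1 / 2 * (g * W ^ (-p)) + C * (h * S ^ (-p)) := by
  have hp0 : 0 < p := by linarith
  obtain ⟨C, hC, hY⟩ := young_eps p hp (1 / 2 / (p * K)) (by positivity)
  refine ⟨p * K * C, by positivity, fun f g h W V S hf hg hh hW hS hV hfgh => ?_⟩
  have hV' : V ≤ K * W ^ p * S ^ (1 - p) := by
    have : S ^ (p - 1) * S ^ (1 - p) = 1 := by rw [← Real.rpow_add hS]; simp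
    calc V = V * S ^ (p - 1) * S ^ (1 - p) := by rw [mul_assoc, this, mul_one]
      _ ≤ _ := by gcongr
  have e1 : W ^ p * W ^ (-p - 1) = W ^ (-1 : ℝ) := by
    rw [← Real.rpow_add hW]; congr 1; ring
  have s1 : p * V * f * W ^ (-p - 1) ≤ p * K * (f * W ^ (-1 : ℝ) * S ^ (1 - p)) := by
    calc p * V * f * W ^ (-p - 1) ≤ p * (K * W ^ p * S ^ (1 - p)) * f * W ^ (-p - 1) := by gcongr
      _ = p * K * (f * (W ^ p * W ^ (-p - 1)) * S ^ (1 - p)) := by ring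
      _ = _ := by rw [e1]
  have s2 : f * W ^ (-1 : ℝ) * S ^ (1 - p) ≤
      (g * W ^ (-p)) ^ (1 / p) * (h * S ^ (-p)) ^ (1 - 1 / p) := by
    rw [Real.mul_rpow hg (by positivity), Real.mul_rpow hh (by positivity),
      ← Real.rpow_mul hW.le, ← Real.rpow_mul hS.le]
    have a1 : -p * (1 / p) = -1 := by field_simp
    have a2 : -p * (1 - 1 / p) = 1 - p := by field_simp; ring
    rw [a1, a2]
    calc _ ≤ (g ^ (1 / p) * h ^ (1 - 1 / p)) * W ^ (-1 : ℝ) * S ^ (1 - p) := by gcongr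
      _ = _ := by ring
  have s3 := hY (g * W ^ (-p)) (h * S ^ (-p)) (by positivity) (by positivity)
  calc _ ≤ p * K * (1 / 2 / (p * K) * (g * W ^ (-p)) + C * (h * S ^ (-p))) :=
        s1.trans (by gcongr; exact s2.trans s3)
    _ = _ := by field_simp

lemma ac_comp_rpow {F : ℝ → ℝ} {a b : ℝ} (q : ℝ) (hF : AbsolutelyContinuousOnInterval F a b)
    (hpos : ∀ x ∈ uIcc a b, 0 < F x) :
    AbsolutelyContinuousOnInterval (fun x => F x ^ q) a b := by
  obtain ⟨x0, hx0, hmin⟩ := isCompact_uIcc.exists_isMinOn (nonempty_uIcc) hF.continuousOn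
  obtain ⟨x1, hx1, hmax⟩ := isCompact_uIcc.exists_isMaxOn (nonempty_uIcc) hF.continuousOn
  have hcd : ContDiffOn ℝ 1 (fun y : ℝ => y ^ q) (Icc (F x0) (F x1)) := by
    intro y hy
    exact (Real.contDiffAt_rpow_const_of_ne
      (lt_of_lt_of_le (hpos x0 hx0) hy.1).ne').contDiffWithinAt
  obtain ⟨K, hK⟩ := hcd.exists_lipschitzOnWith (by decide) (convex_Icc _ _) isCompact_Icc
  rw [absolutelyContinuousOnInterval_iff] at hF ⊢
  intro ε hε
  obtain ⟨δ, hδ, H⟩ := hF (ε / (K + 1)) (by positivity)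
  refine ⟨δ, hδ, fun E hE hsum => ?_⟩
  have h1 := H E hE hsum
  have hm : ∀ x ∈ uIcc a b, F x ∈ Icc (F x0) (F x1) := fun x hx => ⟨hmin hx, hmax hx⟩
  calc _ ≤ ∑ i ∈ Finset.range E.1, K * dist (F (E.2 i).1) (F (E.2 i).2) := by
        apply Finset.sum_le_sum
        intro i hi
        exact hK.dist_le_mul _ (hm _ (hE.left i hi).left) _ (hm _ (hE.left i hi).right)
    _ = K * ∑ i ∈ Finset.range E.1, dist (F (E.2 i).1) (F (E.2 i).2) :=
        (Finset.mul_sum _ _ _).symm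
    _ ≤ K * (ε / (K + 1)) := by gcongr
    _ < (K + 1) * (ε / (K + 1)) := by gcongr; linarith
    _ = ε := by field

lemma main_real (p : ℝ) (hp : 1 < p) (K : ℝ) (hK : 0 < K) :
    ∃ C : ℝ, 0 < C ∧ ∀ (f g h W V S : ℝ → ℝ) (r : ℝ), 0 ≤ r →
      IntervalIntegrable f volume 0 r → IntervalIntegrable g volume 0 r →
      IntervalIntegrable h volume 0 r →
      (∀ x, W x = W 0 - ∫ t in (0:ℝ)..x, f t) →
      (∀ x, V x = V 0 - ∫ t in (0:ℝ)..x, g t) →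
      (∀ x, S x = S 0 - ∫ t in (0:ℝ)..x, h t) →
      (∀ᵐ x, x ∈ Ioo 0 r → 0 ≤ f x ∧ 0 ≤ g x ∧ 0 ≤ h x ∧ f x ≤ g x ^ (1 / p) * h x ^ (1 - 1 / p)) →
      (∀ x ∈ Icc 0 r, 0 < W x) → (∀ x ∈ Icc 0 r, 0 < S x) → 0 ≤ V r →
      (∀ x ∈ Icc 0 r, V x * S x ^ (p - 1) ≤ K * W x ^ p) →
      IntervalIntegrable (fun x => g x * W x ^ (-p)) volume 0 r ∧
      ∫ x in (0:ℝ)..r, g x * W x ^ (-p) ≤ 2 * (V 0 * W 0 ^ (-p)) + C * S r ^ (1 - p) := by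
  have hp0 : 0 < p := by linarith
  have hp1 : 0 < p - 1 := by linarith
  obtain ⟨C, hC, hpt⟩ := pointwise_ineq p hp K hK
  refine ⟨2 * (C / (p - 1)), by positivity, ?_⟩
  intro f g h W V S r hr hf hg hh hWe hVe hSe hae hW hS hV hA
  have ac : ∀ (F φ : ℝ → ℝ), IntervalIntegrable φ volume 0 r →
      (∀ x, F x = F 0 - ∫ t in (0:ℝ)..x, φ t) → AbsolutelyContinuousOnInterval F 0 r := by
    intro F φ hφ hF
    have h1 := hφ.absolutelyContinuousOnInterval_intervalIntegral (c := 0) (by simp)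
    have h2 : AbsolutelyContinuousOnInterval (fun _ : ℝ => F 0) 0 r :=
      (LipschitzOnWith.absolutelyContinuousOnInterval (K := 0)
        ((LipschitzWith.const (F 0)).lipschitzOnWith))
    have h3 := h2.sub h1
    have : F = (fun _ : ℝ => F 0) - (fun x => ∫ t in (0:ℝ)..x, φ t) := by
      funext x; exact hF x
    rw [this]; exact h3
  have hd : ∀ (F φ : ℝ → ℝ), IntervalIntegrable φ volume 0 r →
      (∀ x, F x = F 0 - ∫ t in (0:ℝ)..x, φ t) →
      ∀ᵐ x, x ∈ uIcc 0 r → HasDerivAt F (- φ x) x := by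
    intro F φ hφ hF
    filter_upwards [hφ.ae_hasDerivAt_integral] with x hx hxm
    have h1 := (hx hxm 0 (by simp)).const_sub (F 0)
    have : F = (fun x => F 0 - ∫ t in (0:ℝ)..x, φ t) := by
      funext x; exact hF x
    rw [this]; exact h1
  rw [← uIcc_of_le hr] at hW hS
  have acW := ac W f hf hWe
  have acV := ac V g hg hVe
  have acS := ac S h hh hSe
  have acWp := ac_comp_rpow (-p) acW hW
  have acSp := ac_comp_rpow (1 - p) acS hS
  have acH : AbsolutelyContinuousOnInterval
      (fun x => V x * W x ^ (-p) - C / (p - 1) * S x ^ (1 - p)) 0 r :=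
    (acV.mul acWp).sub (acSp.const_mul (C / (p - 1)))
  have hIntb : IntervalIntegrable (fun x => g x * W x ^ (-p)) volume 0 r :=
    hg.mul_continuousOn acWp.continuousOn
  refine ⟨hIntb, ?_⟩
  have hftc := acH.integral_deriv_eq_sub
  have hdi := acH.intervalIntegrable_deriv
  have hne0 : ∀ᵐ x : ℝ, x ≠ 0 := by simp [ae_iff, measure_singleton]
  have hner : ∀ᵐ x : ℝ, x ≠ r := by simp [ae_iff, measure_singleton]
  have hle : ∫ x in (0:ℝ)..r, deriv (fun x => V x * W x ^ (-p) - C / (p - 1) * S x ^ (1 - p)) x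
      ≤ ∫ x in (0:ℝ)..r, -(1 / 2) * (g x * W x ^ (-p)) := by
    apply intervalIntegral.integral_mono_ae_restrict hr hdi (hIntb.const_mul _)
    rw [Filter.EventuallyLE, ae_restrict_iff' measurableSet_Icc]
    filter_upwards [hd W f hf hWe, hd V g hg hVe, hd S h hh hSe, hae, hne0, hner] with
      x dW dV dS hx h0 hr' hxm
    have hxu : x ∈ uIcc 0 r := by rwa [uIcc_of_le hr]
    have hWx := hW x hxu
    have hSx := hS x hxu
    obtain ⟨f0, g0, h0', hfgh⟩ := hx ⟨lt_of_le_of_ne hxm.1 h0.symm, lt_of_le_of_ne hxm.2 hr'⟩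
    have d1 := (dW hxu).rpow_const (p := -p) (Or.inl hWx.ne')
    have d2 := (dS hxu).rpow_const (p := 1 - p) (Or.inl hSx.ne')
    have d3 := ((dV hxu).mul d1).sub (d2.const_mul (C / (p - 1)))
    have d4 : deriv (fun x => V x * W x ^ (-p) - C / (p - 1) * S x ^ (1 - p)) x = _ := d3.deriv
    rw [d4]
    have k := hpt (f x) (g x) (h x) (W x) (V x) (S x) f0 g0 h0' hWx hSx (hA x hxm) hfgh
    have e1 : (1 - p - 1 : ℝ) = -p := by ring
    have e2 : C / (p - 1) * (-h x * (1 - p) * S x ^ (1 - p - 1)) = C * (h x * S x ^ (-p)) := by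
      rw [e1]; field_simp; ring
    rw [e2]
    nlinarith [k]
  rw [hftc, intervalIntegral.integral_const_mul] at hle
  have hS0 := hS 0 (by simp)
  have hWr := hW r (by simp)
  have t1 : 0 ≤ V r * W r ^ (-p) := by positivity
  have t2 : 0 ≤ C / (p - 1) * S 0 ^ (1 - p) := by positivity
  nlinarith

lemma tail_eq {φ : ℝ → ℝ} (hφ : IntegrableOn φ (Ioo 0 1)) {x : ℝ} (hx : x ∈ Ico (0:ℝ) 1) :
    ∫ s in Ioo x 1, φ s = (∫ s in Ioo 0 1, φ s) - ∫ s in (0:ℝ)..x, φ s := by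
  have hi : IntervalIntegrable φ volume 0 1 := by
    rw [intervalIntegrable_iff_integrableOn_Ioo_of_le zero_le_one]; exact hφ
  have h1 : IntervalIntegrable φ volume 0 x := hi.mono_set (by
    rw [uIcc_of_le hx.1, uIcc_of_le zero_le_one]; exact Icc_subset_Icc_right hx.2.le)
  have h2 : IntervalIntegrable φ volume x 1 := hi.mono_set (by
    rw [uIcc_of_le hx.2.le, uIcc_of_le zero_le_one]; exact Icc_subset_Icc_left hx.1)
  have := intervalIntegral.integral_add_adjacent_intervals h1 h2
  rw [← integral_Ioc_eq_integral_Ioo, ← integral_Ioc_eq_integral_Ioo,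
    ← intervalIntegral.integral_of_le hx.2.le, ← intervalIntegral.integral_of_le zero_le_one]
  linarith

lemma integrable_mul_id {w : ℝ → ℝ} (hw : IsRadialWeight w) :
    IntegrableOn (fun s => s * w s) (Ioo 0 1) := by
  have h := hw.2.1.mono_set Ioo_subset_Ico_self
  refine Integrable.mono h (by
    exact (measurable_id.aestronglyMeasurable).mul h.aestronglyMeasurable) ?_
  rw [ae_restrict_iff' measurableSet_Ioo]
  filter_upwards with s hs
  rw [norm_mul, Real.norm_of_nonneg hs.1.le]
  exact mul_le_of_le_one_left (norm_nonneg _) hs.2.le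

lemma hat1_pos {w : ℝ → ℝ} (hw : IsRadialWeight w) {r : ℝ} (hr : r ∈ Ico (0:ℝ) 1) :
    0 < hat1 w r := by
  have hsub : Ioo r 1 ⊆ Ioo 0 1 := Ioo_subset_Ioo_left hr.1
  have hnn : 0 ≤ᵐ[volume.restrict (Ioo r 1)] fun s => s * w s := by
    rw [Filter.EventuallyLE, ae_restrict_iff' measurableSet_Ioo]
    filter_upwards with s hs
    exact mul_nonneg (hsub hs).1.le (hw.1 s (Ioo_subset_Ico_self (hsub hs)))
  refine lt_of_le_of_ne (integral_nonneg_of_ae hnn) (fun h0 => ?_)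
  have hz := (integral_eq_zero_iff_of_nonneg_ae hnn
    ((integrable_mul_id hw).mono_set hsub)).1 h0.symm
  have : hatw w r = 0 := by
    apply integral_eq_zero_of_ae
    have hz' := hz
    rw [Filter.EventuallyEq, ae_restrict_iff' measurableSet_Ioo] at hz' ⊢
    filter_upwards [hz'] with s hs hsm
    rcases mul_eq_zero.1 (hs hsm) with h | h
    · exact absurd h (hsub hsm).1.ne'
    · exact h
  exact (hw.2.2 r hr).ne' this

/-- real version of `s σ(s)` -/
def hsig (p : ℝ) (w v : ℝ → ℝ) (s : ℝ) : ℝ := (ENNReal.ofReal s * sigmaE p w v s).toReal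

lemma aem_sig (p : ℝ) {w v : ℝ → ℝ} (hw : IsRadialWeight w) (hv : IsRadialWeight v) :
    AEMeasurable (fun s => ENNReal.ofReal s * sigmaE p w v s) (volume.restrict (Ioo 0 1)) := by
  have h1 := (hw.2.1.mono_set Ioo_subset_Ico_self).aemeasurable
  have h2 := (hv.2.1.mono_set Ioo_subset_Ico_self).aemeasurable
  unfold sigmaE
  exact (measurable_id.ennreal_ofReal.aemeasurable).mul
    ((h1.ennreal_ofReal.div (h2.ennreal_ofReal.pow_const _)).pow_const _)

lemma pt_fgh (p : ℝ) (hp : 1 < p) (w v : ℝ → ℝ) (s : ℝ) (hs : 0 < s) (hw : 0 ≤ w s) (hv : 0 ≤ v s)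
    (hfin : ENNReal.ofReal s * sigmaE p w v s ≠ ⊤) :
    s * w s ≤ (s * v s) ^ (1 / p) * hsig p w v s ^ (1 - 1 / p) := by
  have hp0 : 0 < p := by linarith
  have hp1 : 0 < p - 1 := by linarith
  have hs' : ENNReal.ofReal s ≠ 0 := by simpa using hs
  have hσ : sigmaE p w v s ≠ ⊤ := fun h => hfin (by rw [h, ENNReal.mul_top hs'])
  rcases hv.eq_or_lt with hv0 | hv0
  · have : w s = 0 := by
      by_contra hne
      have hwpos : 0 < w s := lt_of_le_of_ne hw (Ne.symm hne)
      apply hσ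
      unfold sigmaE
      rw [← hv0, ENNReal.ofReal_zero, ENNReal.zero_rpow_of_pos (by positivity),
        ENNReal.div_zero (by simpa using hwpos), ENNReal.top_rpow_of_pos (by positivity)]
    rw [this, ← hv0]
    unfold hsig
    simp only [mul_zero]
    positivity
  · have e : hsig p w v s = s * (w s / v s ^ (1 / p)) ^ (p / (p - 1)) := by
      unfold hsig sigmaE
      rw [ENNReal.ofReal_rpow_of_pos hv0, ← ENNReal.ofReal_div_of_pos (by positivity),
        ENNReal.ofReal_rpow_of_nonneg (by positivity) (by positivity),
        ← ENNReal.ofReal_mul hs.le, ENNReal.toReal_ofReal (by positivity)]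
    rw [e, Real.mul_rpow hs.le hv, Real.mul_rpow hs.le (by positivity),
      ← Real.rpow_mul (by positivity)]
    have e1 : p / (p - 1) * (1 - 1 / p) = 1 := by field_simp
    have e2 : s ^ (1 / p) * s ^ (1 - 1 / p) = s := by
      rw [← Real.rpow_add hs]; simp
    rw [e1, Real.rpow_one]
    have e3 : v s ^ (1 / p) * (w s / v s ^ (1 / p)) = w s := by
      field_simp
    calc s * w s = (s ^ (1 / p) * s ^ (1 - 1 / p)) * (v s ^ (1 / p) * (w s / v s ^ (1 / p))) := by
          rw [e2, e3]
      _ ≤ _ := le_of_eq (by ring)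

/-- Let `1 < p < ∞` and let `ω` and `ν` be any pair of radial weights.
If `A_p(ω,ν) < ∞`, then `M_p(ω,ν) < ∞`. -/
theorem Ap_implies_Mp (p : ℝ) (hp : 1 < p) (w v : ℝ → ℝ)
    (hw : IsRadialWeight w) (hv : IsRadialWeight v)
    (hAp : ApE p w v < ⊤) : MpE p w v < ⊤ := by
  have hp0 : 0 < p := by linarith
  have hp1 : 0 < p - 1 := by linarith
  have hq0 : 0 < 1 / p := by positivity
  have hq1 : 0 < 1 - 1 / p := by
    have : 1 / p < 1 := by rw [div_lt_one hp0]; exact hp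
    linarith
  have hfi := integrable_mul_id hw
  have hgi := integrable_mul_id hv
  have hVr : ∀ r ∈ Ico (0:ℝ) 1, ∫⁻ s in Ioo r 1, ENNReal.ofReal (s * v s)
      = ENNReal.ofReal (hat1 v r) := by
    intro r hr
    have hsub : Ioo r 1 ⊆ Ioo 0 1 := Ioo_subset_Ioo_left hr.1
    unfold hat1
    rw [ofReal_integral_eq_lintegral_ofReal (hgi.mono_set hsub)]
    rw [Filter.EventuallyLE, ae_restrict_iff' measurableSet_Ioo]
    filter_upwards with s hs
    exact mul_nonneg (hsub hs).1.le (hv.1 s (Ioo_subset_Ico_self (hsub hs)))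
  -- the defining bound
  have hA : ∀ r ∈ Ico (0:ℝ) 1, ENNReal.ofReal (hat1 v r) ^ (1 / p) *
      (∫⁻ s in Ioo r 1, ENNReal.ofReal s * sigmaE p w v s) ^ (1 - 1 / p)
      ≤ ApE p w v * ENNReal.ofReal (hat1 w r) := by
    intro r hr
    have hle : (∫⁻ s in Set.Ioo r 1, ENNReal.ofReal (s * v s)) ^ (1 / p) *
      (∫⁻ s in Set.Ioo r 1, ENNReal.ofReal s * sigmaE p w v s) ^ (1 - 1 / p) /
      ENNReal.ofReal (hat1 w r) ≤ ApE p w v := by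
      unfold ApE
      exact le_iSup₂ (f := fun r (_ : r ∈ Ico (0:ℝ) 1) =>
        (∫⁻ s in Set.Ioo r 1, ENNReal.ofReal (s * v s)) ^ (1 / p) *
        (∫⁻ s in Set.Ioo r 1, ENNReal.ofReal s * sigmaE p w v s) ^ (1 - 1 / p) /
        ENNReal.ofReal (hat1 w r)) r hr
    rw [hVr r hr] at hle
    exact (ENNReal.div_le_iff (by simpa using hat1_pos hw hr) ENNReal.ofReal_ne_top).1 hle
  have hSfin : ∫⁻ s in Ioo 0 1, ENNReal.ofReal s * sigmaE p w v s ≠ ⊤ := by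
    intro htop
    have h := hA 0 (by simp)
    rw [htop, ENNReal.top_rpow_of_pos hq1, ENNReal.mul_top, top_le_iff] at h
    · exact (ENNReal.mul_ne_top hAp.ne ENNReal.ofReal_ne_top) h
    · have := hat1_pos hv (r := 0) (by simp)
      rw [ENNReal.ofReal_rpow_of_pos this]
      simpa using Real.rpow_pos_of_pos this _
  have haem := aem_sig p hw hv
  have hhi : IntegrableOn (hsig p w v) (Ioo 0 1) := integrable_toReal_of_lintegral_ne_top haem hSfin
  have hlt : ∀ᵐ s ∂(volume.restrict (Ioo (0:ℝ) 1)), ENNReal.ofReal s * sigmaE p w v s < ⊤ :=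
    ae_lt_top' haem hSfin
  set T : ℝ → ℝ := fun r => ∫ s in Ioo r 1, hsig p w v s with hT
  have hTr : ∀ r ∈ Ico (0:ℝ) 1, ∫⁻ s in Ioo r 1, ENNReal.ofReal s * sigmaE p w v s
      = ENNReal.ofReal (T r) := by
    intro r hr
    have hsub : Ioo r 1 ⊆ Ioo 0 1 := Ioo_subset_Ioo_left hr.1
    have hne : ∫⁻ s in Ioo r 1, ENNReal.ofReal s * sigmaE p w v s ≠ ⊤ :=
      ne_top_of_le_ne_top hSfin (lintegral_mono_set hsub)
    have := integral_toReal (haem.mono_set hsub) (ae_restrict_of_ae_restrict_of_subset hsub hlt)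
    simp only [hT, hsig]
    rw [this, ENNReal.ofReal_toReal hne]
  have hTnn : ∀ r, 0 ≤ T r := fun r => integral_nonneg (fun s => ENNReal.toReal_nonneg)
  have hTmono : ∀ x y, 0 ≤ x → x ≤ y → T y ≤ T x := by
    intro x y hx hxy
    apply setIntegral_mono_set (hhi.mono_set (Ioo_subset_Ioo_left hx))
    · exact Filter.Eventually.of_forall (fun s => ENNReal.toReal_nonneg)
    · exact (Ioo_subset_Ioo_left hxy).eventuallyLE
  set A := (ApE p w v).toReal with hAdef
  have hA0 : 0 ≤ A := ENNReal.toReal_nonneg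
  set K := A ^ p + 1 with hKdef
  have hK : 0 < K := by positivity
  have hAr : ∀ r ∈ Ico (0:ℝ) 1, hat1 v r * T r ^ (p - 1) ≤ K * hat1 w r ^ p := by
    intro r hr
    have h := hA r hr
    have hv0 := (hat1_pos hv hr).le
    have hw0 := (hat1_pos hw hr).le
    have hT0 := hTnn r
    rw [hTr r hr, ← ENNReal.ofReal_toReal hAp.ne, ENNReal.ofReal_rpow_of_nonneg hv0 hq0.le,
      ENNReal.ofReal_rpow_of_nonneg hT0 hq1.le, ← ENNReal.ofReal_mul (by positivity),
      ← ENNReal.ofReal_mul hA0, ENNReal.ofReal_le_ofReal_iff (by positivity)] at h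
    have h2 := Real.rpow_le_rpow (by positivity) h hp0.le
    rw [Real.mul_rpow (by positivity) (by positivity), Real.mul_rpow (by positivity) (by positivity),
      ← Real.rpow_mul hv0, ← Real.rpow_mul hT0] at h2
    have e1 : 1 / p * p = 1 := by field_simp
    have e2 : (1 - 1 / p) * p = p - 1 := by field_simp
    rw [e1, e2, Real.rpow_one] at h2
    refine h2.trans ?_
    gcongr
    rw [hKdef]; linarith
  obtain ⟨C, hC, hmain⟩ := main_real p hp K hK
  set D := (2 * K + C + T 0 ^ (p - 1)) ^ (1 / p) with hD
  refine lt_of_le_of_lt ?_ (ENNReal.ofReal_lt_top (r := D))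
  unfold MpE
  refine iSup₂_le (fun r hr => ?_)
  have hrI : r ∈ Ico (0:ℝ) 1 := Ioo_subset_Ico_self hr
  rw [hTr r hrI]
  rcases (hTnn r).eq_or_lt with hT0 | hTpos
  · rw [← hT0, ENNReal.ofReal_zero, ENNReal.zero_rpow_of_pos hq1, mul_zero]
    exact zero_le
  have hIntb : ∀ φ : ℝ → ℝ, IntegrableOn φ (Ioo 0 1) → IntervalIntegrable φ volume 0 r := by
    intro φ hφ
    rw [intervalIntegrable_iff_integrableOn_Ioo_of_le hr.1.le]
    exact hφ.mono_set (Ioo_subset_Ioo_right hr.2.le)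
  have hIcc : ∀ x ∈ Icc 0 r, x ∈ Ico (0:ℝ) 1 := fun x hx => ⟨hx.1, hx.2.trans_lt hr.2⟩
  have hWt : ∀ x ∈ Ico (0:ℝ) 1, hat1 w x = hat1 w 0 - ∫ t in (0:ℝ)..x, t * w t :=
    fun x hx => tail_eq hfi hx
  have hVt : ∀ x ∈ Ico (0:ℝ) 1, hat1 v x = hat1 v 0 - ∫ t in (0:ℝ)..x, t * v t :=
    fun x hx => tail_eq hgi hx
  have hTt : ∀ x ∈ Ico (0:ℝ) 1, T x = T 0 - ∫ t in (0:ℝ)..x, hsig p w v t :=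
    fun x hx => tail_eq hhi hx
  have hTpos' : ∀ x ∈ Icc 0 r, 0 < T x := fun x hx => hTpos.trans_le (hTmono x r hx.1 hx.2)
  obtain ⟨hXi, hX⟩ := hmain (fun s => s * w s) (fun s => s * v s) (hsig p w v)
    (fun x => hat1 w 0 - ∫ t in (0:ℝ)..x, t * w t)
    (fun x => hat1 v 0 - ∫ t in (0:ℝ)..x, t * v t)
    (fun x => T 0 - ∫ t in (0:ℝ)..x, hsig p w v t) r hr.1.le (hIntb _ hfi) (hIntb _ hgi) (hIntb _ hhi)
    (fun x => by simp) (fun x => by simp) (fun x => by simp)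
    (by
      rw [ae_restrict_iff' measurableSet_Ioo] at hlt
      filter_upwards [hlt] with s hs hsm
      have hs1 : s ∈ Ioo (0:ℝ) 1 := ⟨hsm.1, hsm.2.trans hr.2⟩
      have a := hw.1 s (Ioo_subset_Ico_self hs1)
      have b := hv.1 s (Ioo_subset_Ico_self hs1)
      exact ⟨mul_nonneg hsm.1.le a, mul_nonneg hsm.1.le b, ENNReal.toReal_nonneg,
        pt_fgh p hp w v s hsm.1 a b (hs hs1).ne⟩)
    (fun x hx => by
      have := hat1_pos hw (hIcc x hx); rwa [hWt x (hIcc x hx)] at this)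
    (fun x hx => by
      have := hTpos' x hx; rwa [hTt x (hIcc x hx)] at this)
    (by have := (hat1_pos hv hrI).le; rwa [hVt r hrI] at this)
    (fun x hx => by
      have := hAr x (hIcc x hx)
      rwa [hTt x (hIcc x hx), hVt x (hIcc x hx), hWt x (hIcc x hx)] at this)
  set X := ∫ x in (0:ℝ)..r, x * v x * (hat1 w 0 - ∫ t in (0:ℝ)..x, t * w t) ^ (-p) with hXdef
  have hXE : ∫⁻ s in Ioo 0 r, ENNReal.ofReal (s * v s) / ENNReal.ofReal (hat1 w s) ^ p
      = ENNReal.ofReal X := by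
    rw [hXdef, intervalIntegral.integral_of_le hr.1.le, integral_Ioc_eq_integral_Ioo]
    have hnn : ∀ s ∈ Ioo 0 r, 0 ≤ s * v s * (hat1 w 0 - ∫ t in (0:ℝ)..s, t * w t) ^ (-p) := by
      intro s hs
      have hs1 : s ∈ Ico (0:ℝ) 1 := hIcc s (Ioo_subset_Icc_self hs)
      rw [← hWt s hs1]
      exact mul_nonneg (mul_nonneg hs.1.le (hv.1 s hs1)) (Real.rpow_nonneg (hat1_pos hw hs1).le _)
    rw [ofReal_integral_eq_lintegral_ofReal]
    · apply setLIntegral_congr_fun measurableSet_Ioo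
      intro s hs
      have hs1 : s ∈ Ico (0:ℝ) 1 := hIcc s (Ioo_subset_Icc_self hs)
      have hWs := hat1_pos hw hs1
      simp only
      rw [← hWt s hs1, ENNReal.ofReal_rpow_of_pos hWs, ← ENNReal.ofReal_div_of_pos (by positivity),
        Real.rpow_neg hWs.le, div_eq_mul_inv]
    · rw [← IntegrableOn, ← intervalIntegrable_iff_integrableOn_Ioo_of_le hr.1.le]
      exact hXi
    · rw [Filter.EventuallyLE, ae_restrict_iff' measurableSet_Ioo]
      exact Filter.Eventually.of_forall hnn
  have hXnn : 0 ≤ X := by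
    rw [hXdef]
    apply intervalIntegral.integral_nonneg hr.1.le
    intro s hs
    have hs1 : s ∈ Ico (0:ℝ) 1 := hIcc s hs
    rw [← hWt s hs1]
    exact mul_nonneg (mul_nonneg hs.1 (hv.1 s hs1)) (Real.rpow_nonneg (hat1_pos hw hs1).le _)
  simp only [intervalIntegral.integral_same, sub_zero] at hX
  rw [← hTt r hrI] at hX
  -- conclude
  have hT0 : 0 < T 0 := hTpos' 0 ⟨le_rfl, hr.1.le⟩
  have hW0 := hat1_pos hw (r := 0) (by simp)
  have hTle : T r ≤ T 0 := hTmono 0 r le_rfl hr.1.le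
  have hTp : T r ^ (p - 1) ≤ T 0 ^ (p - 1) := Real.rpow_le_rpow hTpos.le hTle hp1.le
  have k1 : hat1 v 0 * hat1 w 0 ^ (-p) * T r ^ (p - 1) ≤ K := by
    have h1 := hAr 0 (by simp)
    have e : hat1 w 0 ^ p * hat1 w 0 ^ (-p) = 1 := by rw [← Real.rpow_add hW0]; simp
    have hv0 := (hat1_pos hv (r := 0) (by simp)).le
    calc _ ≤ hat1 v 0 * hat1 w 0 ^ (-p) * T 0 ^ (p - 1) := by gcongr
      _ = hat1 v 0 * T 0 ^ (p - 1) * hat1 w 0 ^ (-p) := by ring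
      _ ≤ K * hat1 w 0 ^ p * hat1 w 0 ^ (-p) := by gcongr
      _ = K := by rw [mul_assoc, e, mul_one]
  have k2 : T r ^ (1 - p) * T r ^ (p - 1) = 1 := by rw [← Real.rpow_add hTpos]; simp
  have k3 : (X + 1) * T r ^ (p - 1) ≤ 2 * K + C + T 0 ^ (p - 1) := by
    have hpos : 0 ≤ T r ^ (p - 1) := by positivity
    have := mul_le_mul_of_nonneg_right hX hpos
    have e : (2 * (hat1 v 0 * hat1 w 0 ^ (-p)) + C * T r ^ (1 - p)) * T r ^ (p - 1)
      = 2 * (hat1 v 0 * hat1 w 0 ^ (-p) * T r ^ (p - 1)) + C * (T r ^ (1 - p) * T r ^ (p - 1)) := by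
      ring
    rw [e, k2] at this
    linarith
  have k4 : ((X + 1) * T r ^ (p - 1)) ^ (1 / p) = (X + 1) ^ (1 / p) * T r ^ (1 - 1 / p) := by
    rw [Real.mul_rpow (by positivity) (by positivity), ← Real.rpow_mul hTpos.le]
    congr 2; field_simp
  rw [hXE, ← ENNReal.ofReal_one, ← ENNReal.ofReal_add hXnn zero_le_one,
    ENNReal.ofReal_rpow_of_nonneg (by positivity) hq0.le,
    ENNReal.ofReal_rpow_of_nonneg hTpos.le hq1.le, ← ENNReal.ofReal_mul (by positivity), ← k4]
  exact ENNReal.ofReal_le_ofReal (Real.rpow_le_rpow (by positivity) k3 hq0.le)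

end
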